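/- Let q be odd, m ≥ 2, 1 ≤ 2t ≤ m, 1 ≤ 2k ≤ m. Define w_{2k}(2r,m) = #{A skew-symmetric m×m of rank exactly 2r over F_q : tr(E_{2k}A) ≠ 0}. Then w_{2k}(2r,m) = q^{2r} w_{2k-2}(2r, m-2) + (q-1)q^{2r-1}(n_a(2r,m-1) - n_a(2r,m-2)) + (q-1)q^{m-2} n_a(2r-2, m-1) - q^{2r-2} w_{2k-2}(2r-2, m-2) - (q-1)q^{2r-3}(n_a(2r-2,m-1) - n_a(2r-2,m-2)). -/

import Mathlib

open Matrix
def IsSkewSym {K : Type} [Field K] {m : ℕ} (A : Matrix (Fin m) (Fin m) K) : Prop :=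
  Aᵀ = -A ∧ ∀ i, A i i = 0

def Estd (K : Type) [Field K] (k m : ℕ) : Matrix (Fin m) (Fin m) K :=
  Matrix.of fun i j =>
    if j.val = i.val + 1 ∧ i.val % 2 = 0 ∧ j.val < 2*k then 1
    else if i.val = j.val + 1 ∧ j.val % 2 = 0 ∧ i.val < 2*k then -1 else 0

noncomputable def na (K : Type) [Field K] (r m : ℕ) : ℕ :=
  Nat.card {A : Matrix (Fin m) (Fin m) K // IsSkewSym A ∧ A.rank = r}

noncomputable def Na (K : Type) [Field K] (r m : ℕ) : ℕ :=
  Nat.card {A : Matrix (Fin m) (Fin m) K // IsSkewSym A ∧ A.rank ≤ r}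

noncomputable def wSmall (K : Type) [Field K] (k r m : ℕ) : ℕ :=
  Nat.card {A : Matrix (Fin m) (Fin m) K //
    IsSkewSym A ∧ A.rank = 2*r ∧ Matrix.trace (Estd K k m * A) ≠ 0}

noncomputable def Wcap (K : Type) [Field K] (k t m : ℕ) : ℕ :=
  Nat.card {A : Matrix (Fin m) (Fin m) K //
    IsSkewSym A ∧ A.rank ≤ 2*t ∧ Matrix.trace (Estd K k m * A) ≠ 0}

noncomputable def projWt (K : Type) [Field K] (m t : ℕ)
    (φ : Matrix (Fin m) (Fin m) K →ₗ[K] K) : ℕ :=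
  Nat.card {x : Projectivization K (Matrix (Fin m) (Fin m) K) //
    ∃ (A : Matrix (Fin m) (Fin m) K) (h : A ≠ 0),
      x = Projectivization.mk K A h ∧ IsSkewSym A ∧ A.rank ≤ 2*t ∧ φ A ≠ 0}

/-!
A skew-symmetric matrix of size `n + 1` consists of a skew-symmetric minor `B` of size `n` and a
first row `(0, x)`; its rank is `rank B` if `x` lies in the range of `B` and `rank B + 2` otherwise.
For odd `q`, size `m` and `k ≥ 1`, the condition `trace (E_{2k} A) ≠ 0` says that the first
coordinate of `x` avoids one value `c(B)`, an affine condition on `x`. The number of such `x` in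
the range of `B` is governed by the functional `x ↦ x 0` on that range, which vanishes exactly when
the first row of `B` does. In that case `B` is a matrix `C` of size `m - 2` bordered by zeros, and
the condition `c(B) ≠ 0` reads `trace (E_{2k-2} C) ≠ 0`.
-/

section RankOfVecCons

variable {K : Type*} [Field K] {m : ℕ} {ι : Type*}

lemma range_vecMulLinear_of_vecCons (A : Matrix (Fin m) ι K) (x : ι → K) :
    LinearMap.range (of (vecCons x A)).vecMulLinear =
      LinearMap.range A.vecMulLinear ⊔ Submodule.span K {x} := by
  rw [range_vecMulLinear, range_vecMulLinear, ← Submodule.span_union, Set.union_comm]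
  exact congrArg (Submodule.span K) (range_cons x A)

variable [Fintype ι]

lemma rank_eq_finrank_range_vecMulLinear (A : Matrix (Fin m) ι K) :
    A.rank = Module.finrank K (LinearMap.range A.vecMulLinear) := by
  rw [rank_eq_finrank_span_row, range_vecMulLinear]

lemma rank_of_vecCons_of_mem {A : Matrix (Fin m) ι K} {x : ι → K}
    (hx : x ∈ LinearMap.range A.vecMulLinear) : (of (vecCons x A)).rank = A.rank := by
  rw [rank_eq_finrank_range_vecMulLinear, range_vecMulLinear_of_vecCons,
    sup_eq_left.2 ((Submodule.span_singleton_le_iff_mem x _).2 hx),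
    rank_eq_finrank_range_vecMulLinear]

lemma rank_of_vecCons_of_notMem {A : Matrix (Fin m) ι K} {x : ι → K}
    (hx : x ∉ LinearMap.range A.vecMulLinear) : (of (vecCons x A)).rank = A.rank + 1 := by
  rw [rank_eq_finrank_range_vecMulLinear, range_vecMulLinear_of_vecCons,
    Submodule.finrank_sup_span_singleton hx, rank_eq_finrank_range_vecMulLinear]

end RankOfVecCons

/-- The matrix obtained from `B` by adjoining a first row `(0, x)` and a first column `(0, -x)`.
Every skew-symmetric matrix of positive size arises from a skew-symmetric `B` in this way. -/
def border {R : Type*} [Zero R] [Neg R] {n : ℕ} (x : Fin n → R) (B : Matrix (Fin n) (Fin n) R) :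
    Matrix (Fin (n + 1)) (Fin (n + 1)) R :=
  of (vecCons (vecCons 0 x) fun i => vecCons (-x i) (B i))

section Border

variable {R : Type*} {n : ℕ}

section Entries

variable [Zero R] [Neg R] (x : Fin n → R) (B : Matrix (Fin n) (Fin n) R)

@[simp] lemma border_zero_zero : border x B 0 0 = 0 := rfl

@[simp] lemma border_zero_succ (j : Fin n) : border x B 0 j.succ = x j := rfl

@[simp] lemma border_succ_zero (i : Fin n) : border x B i.succ 0 = -x i := rfl

@[simp] lemma border_succ_succ (i j : Fin n) : border x B i.succ j.succ = B i j := rfl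

@[simp] lemma submatrix_succ_border : (border x B).submatrix Fin.succ Fin.succ = B := rfl

lemma border_zero_row_eq_zero_iff : border x B 0 = 0 ↔ x = 0 := by
  simp [funext_iff, Fin.forall_fin_succ]

lemma border_left_injective : Function.Injective fun x : Fin n → R => border x B :=
  fun _ _ h => funext fun j => congrFun (congrFun h 0) j.succ

end Entries

lemma trace_border_mul_border [Ring R] (x y : Fin n → R) (B C : Matrix (Fin n) (Fin n) R) :
    trace (border x B * border y C) = trace (B * C) - 2 * (x ⬝ᵥ y) := by
  simp only [trace, diag_apply, mul_apply, Fin.sum_univ_succ, border_zero_zero, border_zero_succ,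
    border_succ_zero, border_succ_succ, dotProduct, Finset.sum_add_distrib, mul_neg, neg_mul,
    Finset.sum_neg_distrib, mul_zero, zero_add, two_mul]
  abel

end Border

section SkewSym

variable {K : Type} [Field K] {n : ℕ}

lemma IsSkewSym.apply_swap {A : Matrix (Fin n) (Fin n) K} (hA : IsSkewSym A) (i j : Fin n) :
    A j i = -A i j :=
  congrFun (congrFun hA.1 i) j

lemma isSkewSym_border {x : Fin n → K} {B : Matrix (Fin n) (Fin n) K} :
    IsSkewSym (border x B) ↔ IsSkewSym B := by
  refine ⟨fun h => ⟨?_, fun i => h.2 i.succ⟩, fun h => ⟨?_, Fin.cases rfl h.2⟩⟩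
  · ext i j
    exact h.apply_swap i.succ j.succ
  · ext i j
    cases i using Fin.cases <;> cases j using Fin.cases
    case succ.succ i j => exact h.apply_swap i j
    all_goals simp

lemma IsSkewSym.border_submatrix_succ {A : Matrix (Fin (n + 1)) (Fin (n + 1)) K}
    (hA : IsSkewSym A) :
    border (fun j => A 0 j.succ) (A.submatrix Fin.succ Fin.succ) = A := by
  ext i j
  cases i using Fin.cases <;> cases j using Fin.cases <;> simp [hA.2, ← hA.apply_swap]

lemma IsSkewSym.submatrix_succ {A : Matrix (Fin (n + 1)) (Fin (n + 1)) K} (hA : IsSkewSym A) :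
    IsSkewSym (A.submatrix Fin.succ Fin.succ) := by
  rwa [← isSkewSym_border, hA.border_submatrix_succ]

lemma IsSkewSym.dotProduct_mulVec_self {B : Matrix (Fin n) (Fin n) K} (hB : IsSkewSym B)
    (u : Fin n → K) : u ⬝ᵥ B *ᵥ u = 0 := by
  simp only [mulVec, dotProduct, Finset.mul_sum]
  rw [← Finset.sum_product']
  refine Finset.sum_involution (fun p _ => p.swap) ?_ ?_ (by simp) (by simp)
  · rintro ⟨i, j⟩ -
    simp only [Prod.swap, hB.apply_swap i j]
    ring
  · rintro ⟨i, j⟩ - hne heq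
    obtain rfl : j = i := congrArg Prod.fst heq
    simp [hB.2] at hne

lemma IsSkewSym.cons_zero_mem_range_iff {x : Fin n → K} {B : Matrix (Fin n) (Fin n) K}
    (hB : IsSkewSym B) :
    vecCons 0 x ∈ LinearMap.range (of (vecCons (-x) Bᵀ)).mulVecLin ↔
      x ∈ LinearMap.range B.mulVecLin := by
  have hcons (u : Fin n → K) :
      of (vecCons (-x) Bᵀ) *ᵥ u = vecCons (-(x ⬝ᵥ u)) (-(B *ᵥ u)) := by
    rw [hB.1]
    exact (cons_mulVec _ _ _).trans (by rw [neg_dotProduct]; congr 1; exact neg_mulVec _ _)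
  simp only [LinearMap.mem_range, mulVecLin_apply, hcons, vecCons_inj]
  constructor
  · rintro ⟨u, -, hu⟩
    exact ⟨-u, by rw [mulVec_neg, hu]⟩
  · rintro ⟨u, rfl⟩
    refine ⟨-u, ?_, by rw [mulVec_neg, neg_neg]⟩
    rw [dotProduct_neg, neg_neg, dotProduct_comm, hB.dotProduct_mulVec_self]

lemma border_eq_of_vecCons (x : Fin n → K) (B : Matrix (Fin n) (Fin n) K) :
    border x B = of (vecCons (vecCons 0 x) (of (vecCons (-x) Bᵀ))ᵀ) := by
  ext i j
  cases i using Fin.cases <;> cases j using Fin.cases <;> rfl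

lemma rank_border_of_mem_range {x : Fin n → K} {B : Matrix (Fin n) (Fin n) K} (hB : IsSkewSym B)
    (hx : x ∈ LinearMap.range B.mulVecLin) : (border x B).rank = B.rank := by
  rw [border_eq_of_vecCons, rank_of_vecCons_of_mem, rank_transpose, rank_of_vecCons_of_mem,
    rank_transpose]
  · rw [vecMulLinear_transpose]
    exact neg_mem hx
  · rw [vecMulLinear_transpose]
    exact hB.cons_zero_mem_range_iff.2 hx

lemma rank_border_of_notMem_range {x : Fin n → K} {B : Matrix (Fin n) (Fin n) K}
    (hB : IsSkewSym B) (hx : x ∉ LinearMap.range B.mulVecLin) :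
    (border x B).rank = B.rank + 2 := by
  rw [border_eq_of_vecCons, rank_of_vecCons_of_notMem, rank_transpose, rank_of_vecCons_of_notMem,
    rank_transpose]
  · rwa [vecMulLinear_transpose, neg_mem_iff]
  · rwa [vecMulLinear_transpose, hB.cons_zero_mem_range_iff]

lemma isSkewSym_Estd (k m : ℕ) : IsSkewSym (Estd K k m) := by
  refine ⟨?_, fun i => by simp [Estd]⟩
  ext i j
  simp only [Estd, transpose_apply, Matrix.neg_apply, of_apply]
  grind

lemma Estd_succ (k n : ℕ) :
    Estd K (k + 1) (n + 2) = border (Pi.single 0 1) (border 0 (Estd K k n)) := by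
  have hE := isSkewSym_Estd (K := K) (k + 1) (n + 2)
  rw [← hE.border_submatrix_succ, ← hE.submatrix_succ.border_submatrix_succ]
  congr 2
  · funext j
    cases j using Fin.cases <;> simp [Estd]
    omega
  · funext j
    simp [Estd]
  · ext i j
    simp only [Estd, submatrix_apply, of_apply, Fin.val_succ]
    grind

lemma trace_Estd_succ_mul (k : ℕ) {A : Matrix (Fin (n + 2)) (Fin (n + 2)) K} (hA : IsSkewSym A) :
    trace (Estd K (k + 1) (n + 2) * A) =
      trace (border 0 (Estd K k n) * A.submatrix Fin.succ Fin.succ) - 2 * A 0 1 := by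
  conv_lhs => rw [Estd_succ, ← hA.border_submatrix_succ]
  rw [trace_border_mul_border, single_one_dotProduct]
  rfl

end SkewSym

section Counting

open Finset
open scoped Classical

section Functional

variable {K V : Type*} [Field K] [Fintype K] [AddCommGroup V] [Module K V] [Fintype V]

lemma card_filter_dual_eq {φ : Module.Dual K V} (hφ : φ ≠ 0) (c : K) :
    #{v | φ v = c} = Fintype.card K ^ (Module.finrank K V - 1) := by
  obtain ⟨v₀, rfl⟩ := LinearMap.surjective hφ c
  have translate : {v // φ v = φ v₀} ≃ LinearMap.ker φ :=
    (Equiv.subRight v₀).subtypeEquiv fun v => by simp [sub_eq_zero]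
  rw [← Fintype.card_subtype, Fintype.card_congr translate,
    Module.card_eq_pow_finrank (K := K), ← φ.finrank_ker_add_one_of_ne_zero hφ,
    Nat.add_sub_cancel]

lemma card_filter_dual_ne {φ : Module.Dual K V} (hφ : φ ≠ 0) (c : K) :
    (#{v | φ v ≠ c} : ℤ) =
      ((Fintype.card K : ℤ) - 1) * (Fintype.card K : ℤ) ^ (Module.finrank K V - 1) := by
  have hsplit := card_filter_add_card_filter_not (s := (univ : Finset V)) (φ · = c)
  rw [card_filter_dual_eq hφ, card_univ, Module.card_eq_pow_finrank (K := K) (V := V),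
    ← φ.finrank_ker_add_one_of_ne_zero hφ, Nat.add_sub_cancel, pow_succ] at hsplit
  rw [← φ.finrank_ker_add_one_of_ne_zero hφ, Nat.add_sub_cancel]
  push_cast [← @Nat.cast_inj ℤ] at hsplit
  linear_combination hsplit

end Functional

section Range

variable {K : Type*} [Field K] [Fintype K] {m n : Type*} [Fintype m] [DecidableEq m] [Fintype n]

lemma card_filter_apply_ne (i : m) (c : K) :
    (#{x : m → K | x i ≠ c} : ℤ) =
      ((Fintype.card K : ℤ) - 1) * (Fintype.card K : ℤ) ^ (Fintype.card m - 1) := by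
  have hproj : (LinearMap.proj i : Module.Dual K (m → K)) ≠ 0 := fun h => by
    simpa using LinearMap.congr_fun h (Pi.single i 1)
  rw [← Module.finrank_fintype_fun_eq_card (R := K) (η := m), ← card_filter_dual_ne hproj c]
  rfl

lemma card_filter_mem_range_apply_ne_of_row_eq_zero {A : Matrix m n K} {i : m} (hA : A i = 0)
    (c : K) :
    #{x | x ∈ LinearMap.range A.mulVecLin ∧ x i ≠ c} =
      if c ≠ 0 then Fintype.card K ^ A.rank else 0 := by
  have hcoord : ∀ x, x ∈ LinearMap.range A.mulVecLin ∧ x i ≠ c ↔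
      x ∈ LinearMap.range A.mulVecLin ∧ c ≠ 0 := by
    refine fun x => and_congr_right ?_
    rintro ⟨u, rfl⟩
    simp [mulVec, hA, eq_comm]
  simp only [hcoord]
  split_ifs with hc
  · simp only [hc, ne_eq, not_false_eq_true, and_true]
    rw [← Fintype.card_subtype, rank, ← Module.card_eq_pow_finrank]
  · simp [hc]

lemma card_filter_mem_range_apply_ne_of_row_ne_zero {A : Matrix m n K} {i : m} (hA : A i ≠ 0)
    (c : K) :
    (#{x | x ∈ LinearMap.range A.mulVecLin ∧ x i ≠ c} : ℤ) =
      ((Fintype.card K : ℤ) - 1) * (Fintype.card K : ℤ) ^ (A.rank - 1) := by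
  let φ : Module.Dual K (LinearMap.range A.mulVecLin) :=
    (LinearMap.proj i).comp (LinearMap.range A.mulVecLin).subtype
  have hφ : φ ≠ 0 := fun h => hA <| funext fun j => by
    simpa [φ] using
      LinearMap.congr_fun h ⟨A.mulVecLin (Pi.single j 1), LinearMap.mem_range_self _ _⟩
  rw [rank, ← card_filter_dual_ne hφ c, Nat.cast_inj, ← Fintype.card_subtype,
    ← Fintype.card_subtype]
  exact (Fintype.card_congr (Equiv.subtypeSubtypeEquivSubtypeInter _ _)).symm

end Range

variable {K : Type} [Field K] [Fintype K] {n : ℕ}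

/-- The finite set of skew-symmetric `n × n` matrices of rank exactly `ρ`; it is counted by
`na K ρ n`, whose argument order it follows. -/
noncomputable def skewOfRank (K : Type) [Field K] [Fintype K] (ρ n : ℕ) :
    Finset (Matrix (Fin n) (Fin n) K) :=
  {A | IsSkewSym A ∧ A.rank = ρ}

lemma mem_skewOfRank {ρ : ℕ} {A : Matrix (Fin n) (Fin n) K} :
    A ∈ skewOfRank K ρ n ↔ IsSkewSym A ∧ A.rank = ρ := by
  simp [skewOfRank]

lemma na_eq_card_skewOfRank (ρ n : ℕ) : na K ρ n = #(skewOfRank K ρ n) :=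
  Nat.subtype_card _ fun _ => mem_skewOfRank

lemma wSmall_eq_card_filter_skewOfRank (k r n : ℕ) :
    wSmall K k r n = #{A ∈ skewOfRank K (2 * r) n | trace (Estd K k n * A) ≠ 0} :=
  Nat.subtype_card _ fun _ => by rw [mem_filter, mem_skewOfRank, and_assoc]

lemma border_mem_skewOfRank_of_mem_range {x : Fin n → K} {B : Matrix (Fin n) (Fin n) K} {ρ : ℕ}
    (hx : x ∈ LinearMap.range B.mulVecLin) :
    border x B ∈ skewOfRank K ρ (n + 1) ↔ B ∈ skewOfRank K ρ n := by
  rw [mem_skewOfRank, mem_skewOfRank, isSkewSym_border]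
  exact and_congr_right fun hB => by rw [rank_border_of_mem_range hB hx]

lemma border_mem_skewOfRank_of_notMem_range {x : Fin n → K} {B : Matrix (Fin n) (Fin n) K} {ρ : ℕ}
    (hx : x ∉ LinearMap.range B.mulVecLin) :
    border x B ∈ skewOfRank K (ρ + 2) (n + 1) ↔ B ∈ skewOfRank K ρ n := by
  rw [mem_skewOfRank, mem_skewOfRank, isSkewSym_border]
  exact and_congr_right fun hB => by
    rw [rank_border_of_notMem_range hB hx, Nat.add_right_cancel_iff]

lemma card_eq_sum_card_border_mem {s : Finset (Matrix (Fin (n + 1)) (Fin (n + 1)) K)}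
    {t : Finset (Matrix (Fin n) (Fin n) K)} (hs : ∀ A ∈ s, IsSkewSym A)
    (hst : ∀ x B, border x B ∈ s → B ∈ t) :
    #s = ∑ B ∈ t, #{x | border x B ∈ s} := by
  have hminor : ∀ A ∈ s, A.submatrix Fin.succ Fin.succ ∈ t := fun A hA =>
    hst _ _ (by rwa [(hs A hA).border_submatrix_succ])
  rw [card_eq_sum_card_fiberwise hminor]
  refine sum_congr rfl fun B _ => ?_
  rw [← card_image_of_injective _ (border_left_injective B)]
  congr 1
  ext A
  simp only [mem_filter, mem_image, mem_univ, true_and]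
  constructor
  · rintro ⟨hA, rfl⟩
    have hborder := (hs A hA).border_submatrix_succ
    exact ⟨_, by rwa [hborder], hborder⟩
  · rintro ⟨x, hx, rfl⟩
    exact ⟨hx, submatrix_succ_border x B⟩

lemma card_filter_skewOfRank_add_two (P : Matrix (Fin (n + 1)) (Fin (n + 1)) K → Prop)
    [DecidablePred P] (ρ : ℕ) :
    #{A ∈ skewOfRank K (ρ + 2) (n + 1) | P A} =
      ∑ B ∈ skewOfRank K (ρ + 2) n, #{x | x ∈ LinearMap.range B.mulVecLin ∧ P (border x B)} +
      ∑ B ∈ skewOfRank K ρ n, #{x | x ∉ LinearMap.range B.mulVecLin ∧ P (border x B)} := by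
  let rowInRange (A : Matrix (Fin (n + 1)) (Fin (n + 1)) K) : Prop :=
    (fun j => A 0 j.succ) ∈ LinearMap.range (A.submatrix Fin.succ Fin.succ).mulVecLin
  have rowInRange_border (x : Fin n → K) (B : Matrix (Fin n) (Fin n) K) :
      rowInRange (border x B) ↔ x ∈ LinearMap.range B.mulVecLin := Iff.rfl
  rw [← card_filter_add_card_filter_not rowInRange, filter_filter, filter_filter,
    card_eq_sum_card_border_mem (t := skewOfRank K (ρ + 2) n),
    card_eq_sum_card_border_mem (t := skewOfRank K ρ n)]
  · simp only [mem_filter, rowInRange_border]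
    congr 1 <;> refine sum_congr rfl fun B hB => congrArg card (filter_congr fun x _ => ?_)
    · exact ⟨fun h => h.2.symm,
        fun h => ⟨(border_mem_skewOfRank_of_mem_range h.1).2 hB, h.symm⟩⟩
    · exact ⟨fun h => h.2.symm,
        fun h => ⟨(border_mem_skewOfRank_of_notMem_range h.1).2 hB, h.symm⟩⟩
  · exact fun A hA => (mem_skewOfRank.1 (mem_filter.1 hA).1).1
  · intro x B h
    simp only [mem_filter, rowInRange_border] at h
    exact (border_mem_skewOfRank_of_notMem_range h.2.2).1 h.1
  · exact fun A hA => (mem_skewOfRank.1 (mem_filter.1 hA).1).1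
  · intro x B h
    simp only [mem_filter, rowInRange_border] at h
    exact (border_mem_skewOfRank_of_mem_range h.2.2).1 h.1

lemma card_filter_skewOfRank_row_eq_zero (P : Matrix (Fin (n + 1)) (Fin (n + 1)) K → Prop)
    [DecidablePred P] (ρ : ℕ) :
    #{B ∈ skewOfRank K ρ (n + 1) | B 0 = 0 ∧ P B} = #{C ∈ skewOfRank K ρ n | P (border 0 C)} := by
  have mem_border (C : Matrix (Fin n) (Fin n) K) :
      border 0 C ∈ skewOfRank K ρ (n + 1) ↔ C ∈ skewOfRank K ρ n :=
    border_mem_skewOfRank_of_mem_range (zero_mem _)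
  symm
  refine card_nbij (border 0) ?_ ?_ ?_
  · intro C hC
    simpa [mem_border, border_zero_row_eq_zero_iff] using hC
  · intro C _ D _ h
    exact congrArg (fun B => B.submatrix Fin.succ Fin.succ) h
  · intro B hB
    obtain ⟨hB, hrow, hP⟩ := mem_filter.1 hB
    have hborder : border 0 (B.submatrix Fin.succ Fin.succ) = B := by
      conv_rhs => rw [← (mem_skewOfRank.1 hB).1.border_submatrix_succ, hrow]
      rfl
    refine ⟨B.submatrix Fin.succ Fin.succ, ?_, hborder⟩
    rw [mem_coe, mem_filter, ← mem_border, hborder]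
    exact ⟨hB, hP⟩

lemma sum_card_mem_range_apply_zero_ne (c : Matrix (Fin (n + 1)) (Fin (n + 1)) K → K) (ρ : ℕ) :
    (∑ B ∈ skewOfRank K ρ (n + 1),
        #{x | x ∈ LinearMap.range B.mulVecLin ∧ x 0 ≠ c B} : ℤ) =
      (Fintype.card K : ℤ) ^ ρ * #{C ∈ skewOfRank K ρ n | c (border 0 C) ≠ 0} +
      ((Fintype.card K : ℤ) - 1) * (Fintype.card K : ℤ) ^ (ρ - 1) *
        (na K ρ (n + 1) - na K ρ n) := by
  have hzero : (#{B ∈ skewOfRank K ρ (n + 1) | B 0 = 0} : ℤ) = na K ρ n := by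
    simpa [na_eq_card_skewOfRank] using
      card_filter_skewOfRank_row_eq_zero (K := K) (n := n) (fun _ => True) ρ
  have hnonzero : (#{B ∈ skewOfRank K ρ (n + 1) | B 0 ≠ 0} : ℤ) =
      na K ρ (n + 1) - na K ρ n := by
    have hsplit := card_filter_add_card_filter_not (s := skewOfRank K ρ (n + 1)) (· 0 = 0)
    rw [← hzero, na_eq_card_skewOfRank, ← hsplit]
    push_cast
    ring
  rw [← sum_filter_add_sum_filter_not _ (fun B => B 0 = 0), ← hnonzero,
    ← card_filter_skewOfRank_row_eq_zero (fun B => c B ≠ 0)]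
  congr 1
  · calc
      _ = ∑ B ∈ skewOfRank K ρ (n + 1) with B 0 = 0,
            if c B ≠ 0 then (Fintype.card K : ℤ) ^ ρ else 0 :=
          sum_congr rfl fun B hB => by
            obtain ⟨hB, hrow⟩ := mem_filter.1 hB
            rw [card_filter_mem_range_apply_ne_of_row_eq_zero hrow, (mem_skewOfRank.1 hB).2]
            push_cast
            rfl
      _ = _ := by
        rw [← sum_filter, sum_const, nsmul_eq_mul, filter_filter, mul_comm]
  · rw [sum_congr rfl fun B hB => ?_, sum_const, nsmul_eq_mul, mul_comm]
    obtain ⟨hB, hrow⟩ := mem_filter.1 hB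
    rw [card_filter_mem_range_apply_ne_of_row_ne_zero hrow, (mem_skewOfRank.1 hB).2]

lemma sum_card_notMem_range_apply_zero_ne (c : Matrix (Fin (n + 1)) (Fin (n + 1)) K → K)
    (ρ : ℕ) :
    (∑ B ∈ skewOfRank K ρ (n + 1),
        #{x | x ∉ LinearMap.range B.mulVecLin ∧ x 0 ≠ c B} : ℤ) =
      ((Fintype.card K : ℤ) - 1) * (Fintype.card K : ℤ) ^ n * na K ρ (n + 1) -
      ∑ B ∈ skewOfRank K ρ (n + 1),
        (#{x | x ∈ LinearMap.range B.mulVecLin ∧ x 0 ≠ c B} : ℤ) := by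
  have hcompl (B : Matrix (Fin (n + 1)) (Fin (n + 1)) K) :
      (#{x | x ∉ LinearMap.range B.mulVecLin ∧ x 0 ≠ c B} : ℤ) =
        ((Fintype.card K : ℤ) - 1) * (Fintype.card K : ℤ) ^ n -
          #{x | x ∈ LinearMap.range B.mulVecLin ∧ x 0 ≠ c B} := by
    have hall := card_filter_apply_ne (0 : Fin (n + 1)) (c B)
    rw [← card_filter_add_card_filter_not (· ∈ LinearMap.range B.mulVecLin), filter_filter,
      filter_filter, Fintype.card_fin, Nat.add_sub_cancel] at hall
    simp only [and_comm (a := _ ≠ _)] at hall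
    push_cast at hall
    linear_combination hall
  rw [sum_congr rfl fun B _ => hcompl B, sum_sub_distrib, sum_const, nsmul_eq_mul,
    na_eq_card_skewOfRank, mul_comm]

theorem card_filter_skewOfRank_apply_zero_one_ne
    (c : Matrix (Fin (n + 1)) (Fin (n + 1)) K → K) (ρ : ℕ) :
    (#{A ∈ skewOfRank K (ρ + 2) (n + 2) | A 0 1 ≠ c (A.submatrix Fin.succ Fin.succ)} : ℤ) =
      (Fintype.card K : ℤ) ^ (ρ + 2) * #{C ∈ skewOfRank K (ρ + 2) n | c (border 0 C) ≠ 0} +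
      ((Fintype.card K : ℤ) - 1) * (Fintype.card K : ℤ) ^ (ρ + 1) *
        (na K (ρ + 2) (n + 1) - na K (ρ + 2) n) +
      ((Fintype.card K : ℤ) - 1) * (Fintype.card K : ℤ) ^ n * na K ρ (n + 1) -
      (Fintype.card K : ℤ) ^ ρ * #{C ∈ skewOfRank K ρ n | c (border 0 C) ≠ 0} -
      ((Fintype.card K : ℤ) - 1) * (Fintype.card K : ℤ) ^ (ρ - 1) *
        (na K ρ (n + 1) - na K ρ n) := by
  have hcoord (x : Fin (n + 1) → K) (B : Matrix (Fin (n + 1)) (Fin (n + 1)) K) :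
      border x B 0 1 = x 0 := rfl
  rw [card_filter_skewOfRank_add_two]
  simp only [submatrix_succ_border, hcoord]
  push_cast
  rw [sum_card_notMem_range_apply_zero_ne, sum_card_mem_range_apply_zero_ne,
    sum_card_mem_range_apply_zero_ne]
  simp only [Nat.add_succ_sub_one]
  ring

lemma wSmall_succ_eq_card_filter_apply_ne (h2 : (2 : K) ≠ 0) (k r : ℕ) :
    wSmall K (k + 1) r (n + 2) =
      #{A ∈ skewOfRank K (2 * r) (n + 2) |
        A 0 1 ≠ trace (border 0 (Estd K k n) * A.submatrix Fin.succ Fin.succ) / 2} := by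
  rw [wSmall_eq_card_filter_skewOfRank]
  refine congrArg card (filter_congr fun A hA => ?_)
  rw [trace_Estd_succ_mul k (mem_skewOfRank.1 hA).1, sub_ne_zero, ne_comm, ne_eq, ne_eq,
    eq_div_iff h2, mul_comm]

lemma wSmall_eq_card_filter_border (h2 : (2 : K) ≠ 0) (k r : ℕ) :
    wSmall K k r n =
      #{C ∈ skewOfRank K (2 * r) n | trace (border 0 (Estd K k n) * border 0 C) / 2 ≠ 0} := by
  rw [wSmall_eq_card_filter_skewOfRank]
  refine congrArg card (filter_congr fun C _ => ?_)
  rw [trace_border_mul_border, dotProduct_zero, mul_zero, sub_zero, div_ne_zero_iff,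
    and_iff_left h2]

end Counting

theorem stmt13 (K : Type) [Field K] [Fintype K] (hchar : ringChar K ≠ 2)
    (m k r : ℕ) (hk : 1 ≤ k) (hkm : 2*k ≤ m) (hr : 1 ≤ r) (hrm : 2*r ≤ m) :
    (wSmall K k r m : ℤ) =
      (Fintype.card K : ℤ)^(2*r) * wSmall K (k-1) r (m-2)
      + ((Fintype.card K : ℤ) - 1) * (Fintype.card K : ℤ)^(2*r-1)
          * ((na K (2*r) (m-1) : ℤ) - (na K (2*r) (m-2) : ℤ))
      + ((Fintype.card K : ℤ) - 1) * (Fintype.card K : ℤ)^(m-2)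
          * (na K (2*r-2) (m-1) : ℤ)
      - (Fintype.card K : ℤ)^(2*r-2) * wSmall K (k-1) (r-1) (m-2)
      - ((Fintype.card K : ℤ) - 1) * (Fintype.card K : ℤ)^(2*r-3)
          * ((na K (2*r-2) (m-1) : ℤ) - (na K (2*r-2) (m-2) : ℤ)) := by
  have h2 : (2 : K) ≠ 0 := Ring.two_ne_zero hchar
  obtain ⟨k, rfl⟩ := Nat.exists_eq_add_of_le' hk
  obtain ⟨r, rfl⟩ := Nat.exists_eq_add_of_le' hr
  obtain ⟨n, rfl⟩ := Nat.exists_eq_add_of_le' (show 2 ≤ m by omega)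
  simp only [Nat.add_sub_cancel]
  rw [wSmall_succ_eq_card_filter_apply_ne h2, wSmall_eq_card_filter_border h2,
    wSmall_eq_card_filter_border h2]
  exact card_filter_skewOfRank_apply_zero_one_ne
    (fun B => trace (border 0 (Estd K k n) * B) / 2) (2 * r)
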